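/- arXiv:1602.01133 — 2 statements merged into one kernel-verified Lean document; each statement's English description precedes it below -/
import Mathlib

section
/- Every non-negative integer m can be written as m = x² + T_y + T_z for some non-negative integers x, y, z. -/
/-- The `k`-th triangular number. -/
def T (k : ℕ) : ℕ := k * (k + 1) / 2

/-!
Writing `4 * m + 1 = (2 * x) ^ 2 + (2 * b) ^ 2 + (2 * c + 1) ^ 2` gives
`m = x ^ 2 + T (b + c) + T (c - b)`, where `T k = k * (k + 1) / 2` is a triangular number for every
integer `k`. So it suffices that every `n ≡ 1 [MOD 4]` is a sum of three integer squares. By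
Dirichlet there is a prime `q ≡ 1 [MOD 4]` with `q ≡ -1 [MOD n]`, and quadratic reciprocity makes
`n` a square modulo `q`. A pigeonhole argument then solves `n * t ^ 2 = z ^ 2 + q * w ^ 2` with
`t ≠ 0`. Since `q` is a sum of two squares, `n` is a sum of three rational squares, and the descent
of Davenport and Cassels makes these squares integral.
-/

section DavenportCassels

variable {M : Type*} [AddCommGroup M]

/-- A quadratic form over `ℤ` is Euclidean (in the sense of P. L. Clark) if every non-integral
rational vector `v` admits an integral vector `a` with `0 < |Q (v - a)| < 1`; such forms are the
ones to which the Davenport–Cassels descent applies. The rational vector is encoded as `x / t` with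
`x` integral, and the inequalities are multiplied by `t ^ 2`. -/
def IsEuclideanForm (Q : QuadraticForm ℤ M) : Prop :=
  ∀ (t : ℤ) (x : M), t ≠ 0 → (∀ a, x ≠ t • a) →
    ∃ a, 0 < |Q (x - t • a)| ∧ |Q (x - t • a)| < t ^ 2

/- The line through `x / t` and the integral vector `a` meets the quadric `Q = n` in a second
point, which is `y / s`. -/
lemma exists_map_sub_smul_eq_mul_and_map_eq_mul_sq (Q : QuadraticForm ℤ M) {n t : ℤ} {x : M}
    (h : Q x = n * t ^ 2) (a : M) :
    ∃ (s : ℤ) (y : M), Q (x - t • a) = t * s ∧ Q y = n * s ^ 2 := by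
  set p := QuadraticMap.polar Q x a
  have map_lin_comb (k l : ℤ) : Q (k • x + l • a) = k ^ 2 * Q x + l ^ 2 * Q a + k * l * p := by
    simp only [QuadraticMap.map_add Q, QuadraticMap.map_smul, QuadraticMap.polar_smul_left,
      QuadraticMap.polar_smul_right, smul_eq_mul, p]
    ring
  refine ⟨n * t - p + t * Q a, (Q a - n) • x + (2 * n * t - p) • a, ?_, ?_⟩
  · have hsub : x - t • a = (1 : ℤ) • x + (-t) • a := by module
    rw [hsub, map_lin_comb, h]
    ring
  · rw [map_lin_comb, h]
    ring

/-- The **Davenport–Cassels theorem**. -/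
theorem IsEuclideanForm.exists_map_eq_of_map_eq_mul_sq {Q : QuadraticForm ℤ M}
    (hQ : IsEuclideanForm Q) {n t : ℤ} (ht : t ≠ 0) {x : M} (h : Q x = n * t ^ 2) :
    ∃ a, Q a = n := by
  induction hd : t.natAbs using Nat.strong_induction_on generalizing t x with
  | _ d ih =>
    by_cases hx : ∃ a, x = t • a
    · obtain ⟨a, rfl⟩ := hx
      refine ⟨a, mul_right_cancel₀ (pow_ne_zero 2 ht) ?_⟩
      rw [← h, QuadraticMap.map_smul, smul_eq_mul]
      ring
    · obtain ⟨a, hpos, hlt⟩ := hQ t x ht (not_exists.mp hx)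
      obtain ⟨s, y, hs, hy⟩ := exists_map_sub_smul_eq_mul_and_map_eq_mul_sq Q h a
      rw [hs] at hpos hlt
      have hs0 : s ≠ 0 := right_ne_zero_of_mul (abs_pos.mp hpos)
      have hst : |s| < |t| := by
        rw [abs_mul, ← sq_abs, sq] at hlt
        exact lt_of_mul_lt_mul_left hlt (abs_nonneg t)
      exact ih s.natAbs (hd ▸ Int.natAbs_lt_iff_sq_lt.mpr (sq_lt_sq.mpr hst)) hs0 hy rfl

lemma exists_four_mul_sub_mul_sq_le_sq (x : ℤ) {t : ℤ} (ht : t ≠ 0) :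
    ∃ a : ℤ, 4 * (x - t * a) ^ 2 ≤ t ^ 2 := by
  have htq : (t : ℚ) ≠ 0 := by exact_mod_cast ht
  have hround : ((x : ℚ) / t - round ((x : ℚ) / t)) ^ 2 ≤ (1 / 2) ^ 2 :=
    sq_le_sq.mpr ((abs_sub_round _).trans (le_abs_self _))
  refine ⟨round ((x : ℚ) / t), ?_⟩
  generalize round ((x : ℚ) / t) = a at hround
  suffices 4 * ((x : ℚ) - t * a) ^ 2 ≤ (t : ℚ) ^ 2 by exact_mod_cast this
  calc 4 * ((x : ℚ) - t * a) ^ 2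
      = 4 * (t : ℚ) ^ 2 * ((x : ℚ) / t - a) ^ 2 := by field_simp
    _ ≤ 4 * (t : ℚ) ^ 2 * (1 / 2) ^ 2 := by gcongr
    _ = (t : ℚ) ^ 2 := by ring

lemma isEuclideanForm_weightedSumSquares {ι : Type*} [Fintype ι] {w : ι → ℤ}
    (hw : ∀ i, 0 < w i) (hsum : ∑ i, w i < 4) :
    IsEuclideanForm (QuadraticMap.weightedSumSquares ℤ w) := by
  intro t x ht hx
  choose a ha using fun i ↦ exists_four_mul_sub_mul_sq_le_sq (x i) ht
  have hQ : QuadraticMap.weightedSumSquares ℤ w (x - t • a) = ∑ i, w i * (x i - t * a i) ^ 2 := by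
    simp [QuadraticMap.weightedSumSquares_apply, sq]
  have hterm (i : ι) : 0 ≤ w i * (x i - t * a i) ^ 2 := mul_nonneg (hw i).le (sq_nonneg _)
  refine ⟨a, ?_⟩
  rw [hQ, abs_of_nonneg (Finset.sum_nonneg fun i _ ↦ hterm i)]
  constructor
  · obtain ⟨i, hi⟩ := Function.ne_iff.mp (hx a)
    have : x i - t * a i ≠ 0 := sub_ne_zero.mpr (by simpa using hi)
    exact Finset.sum_pos' (fun i _ ↦ hterm i)
      ⟨i, Finset.mem_univ i, mul_pos (hw i) (by positivity)⟩
  · refine lt_of_mul_lt_mul_left (a := 4) ?_ (by norm_num)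
    calc 4 * ∑ i, w i * (x i - t * a i) ^ 2
        = ∑ i, w i * (4 * (x i - t * a i) ^ 2) := by
          rw [Finset.mul_sum]; exact Finset.sum_congr rfl fun i _ ↦ by ring
      _ ≤ ∑ i, w i * t ^ 2 := by
          gcongr with i
          · exact (hw i).le
          · exact ha i
      _ = (∑ i, w i) * t ^ 2 := (Finset.sum_mul ..).symm
      _ < 4 * t ^ 2 := by gcongr

lemma exists_sum_three_sq_of_mul_sq_eq {n t x y z : ℤ} (ht : t ≠ 0)
    (h : n * t ^ 2 = x ^ 2 + y ^ 2 + z ^ 2) : ∃ a b c : ℤ, n = a ^ 2 + b ^ 2 + c ^ 2 := by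
  have apply_eq (v : Fin 3 → ℤ) : QuadraticMap.weightedSumSquares ℤ (1 : Fin 3 → ℤ) v =
      v 0 ^ 2 + v 1 ^ 2 + v 2 ^ 2 := by
    simp [QuadraticMap.weightedSumSquares_apply, Fin.sum_univ_three, sq]
  have hQ : IsEuclideanForm (QuadraticMap.weightedSumSquares ℤ (1 : Fin 3 → ℤ)) :=
    isEuclideanForm_weightedSumSquares (by simp) (by simp)
  obtain ⟨a, ha⟩ := hQ.exists_map_eq_of_map_eq_mul_sq ht (x := ![x, y, z]) (by
    rw [apply_eq, h]; rfl)
  exact ⟨a 0, a 1, a 2, by rw [← ha, apply_eq]⟩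

end DavenportCassels

section Legendre

/-- The **Brauer–Reynolds lemma**. -/
lemma exists_ne_zero_map_eq_zero_abs_le {ι G : Type*} [Fintype ι] [AddGroup G] [Finite G]
    (φ : (ι → ℤ) →+ G) (b : ι → ℕ) (hb : Nat.card G < ∏ i, (b i + 1)) :
    ∃ v ≠ 0, φ v = 0 ∧ ∀ i, |v i| ≤ b i := by
  let box (u : ∀ i, Fin (b i + 1)) : ι → ℤ := fun i ↦ (u i : ℕ)
  have hinj : ¬ Function.Injective (φ ∘ box) := fun h ↦
    hb.not_ge (by simpa [Nat.card_pi] using Nat.card_le_card_of_injective _ h)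
  obtain ⟨u, v, huv, hne⟩ := Function.not_injective_iff.mp hinj
  refine ⟨box u - box v, ?_, by simpa [sub_eq_zero] using huv, fun i ↦ ?_⟩
  · contrapose! hne
    funext i
    have := congrFun hne i
    simp only [box, Pi.sub_apply, Pi.zero_apply] at this
    omega
  · simp only [box, Pi.sub_apply, abs_le]
    omega

lemma exists_ne_zero_map_eq_zero_sq_le {ι G : Type*} [Fintype ι] [Nonempty ι] [AddGroup G]
    [Finite G] (φ : (ι → ℤ) →+ G) (N : ι → ℕ) (hN : Nat.card G ^ 2 ≤ ∏ i, N i) :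
    ∃ v ≠ 0, φ v = 0 ∧ ∀ i, v i ^ 2 ≤ N i := by
  have hpos : 0 < ∏ i, N i := (pow_pos Nat.card_pos 2).trans_le hN
  have hcard : Nat.card G < ∏ i, ((N i).sqrt + 1) := by
    refine lt_of_pow_lt_pow_left₀ 2 (Nat.zero_le _) (hN.trans_lt ?_)
    rw [← Finset.prod_pow]
    exact Finset.prod_lt_prod_of_nonempty
      (fun i hi ↦ Nat.pos_of_ne_zero (Finset.prod_ne_zero_iff.mp hpos.ne' i hi))
      (fun i _ ↦ Nat.lt_succ_sqrt' (N i)) Finset.univ_nonempty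
  obtain ⟨v, hv, hφ, hle⟩ := exists_ne_zero_map_eq_zero_abs_le φ _ hcard
  refine ⟨v, hv, hφ, fun i ↦ ?_⟩
  calc v i ^ 2 = |v i| ^ 2 := (sq_abs _).symm
    _ ≤ ((N i).sqrt : ℤ) ^ 2 := by gcongr; exact hle i
    _ ≤ N i := by exact_mod_cast Nat.sqrt_le' (N i)

lemma exists_ne_zero_sq_le_mul_dvd {a b : ℕ} [NeZero a] [NeZero b] (hab : a.Coprime b)
    (ha : IsSquare (a : ZMod b)) (hb : IsSquare (-b : ZMod a)) :
    ∃ z w t : ℤ, (z ≠ 0 ∨ w ≠ 0 ∨ t ≠ 0) ∧ z ^ 2 ≤ a * b ∧ w ^ 2 ≤ a ∧ t ^ 2 ≤ b ∧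
      (a * b : ℤ) ∣ z ^ 2 + b * w ^ 2 - a * t ^ 2 := by
  obtain ⟨r, hr⟩ := ha
  obtain ⟨s, hs⟩ := hb
  let φ : (Fin 3 → ℤ) →+ ZMod a × ZMod b :=
    AddMonoidHom.mk' (fun v ↦ (v 0 - s * v 1, v 0 - r * v 2)) fun u v ↦ by
      ext <;> simp <;> ring
  obtain ⟨v, hv, hφ, hle⟩ := exists_ne_zero_map_eq_zero_sq_le φ ![a * b, a, b]
    (by simp [Fin.prod_univ_three, sq, mul_assoc])
  obtain ⟨hva, hvb⟩ : v 0 - s * v 1 = 0 ∧ v 0 - r * v 2 = 0 := Prod.mk.inj hφ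
  refine ⟨v 0, v 1, v 2, ?_, by simpa using hle 0, hle 1, hle 2, ?_⟩
  · contrapose! hv
    ext i
    fin_cases i
    exacts [hv.1, hv.2.1, hv.2.2]
  · refine (Nat.isCoprime_iff_coprime.mpr hab).mul_dvd ?_ ?_
    · rw [← ZMod.intCast_zmod_eq_zero_iff_dvd]
      push_cast
      rw [ZMod.natCast_self]
      linear_combination (v 0 + s * v 1) * hva - (v 1 : ZMod a) ^ 2 * hs
    · rw [← ZMod.intCast_zmod_eq_zero_iff_dvd]
      push_cast
      rw [ZMod.natCast_self]
      linear_combination (v 0 + r * v 2) * hvb - (v 2 : ZMod b) ^ 2 * hr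

lemma isSquare_right_of_coprime_of_isSquare_mul {a b : ℕ} (hab : a.Coprime b)
    (h : IsSquare (a * b)) : IsSquare b := by
  obtain ⟨c, hc⟩ := h
  obtain ⟨d, hd⟩ := exists_eq_pow_of_mul_eq_pow (a := b) (b := a) (c := c) (k := 2)
    (Nat.isUnit_iff.mpr hab.symm) (by rw [mul_comm, hc, sq])
  exact ⟨d, by rw [hd, sq]⟩

lemma eq_zero_or_eq_mul_of_mul_dvd {a b z w t : ℤ} (ha : 0 < a) (hb : 0 < b)
    (hz : z ^ 2 < a * b) (hw : w ^ 2 ≤ a) (ht : t ^ 2 < b)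
    (hdvd : a * b ∣ z ^ 2 + b * w ^ 2 - a * t ^ 2) :
    z ^ 2 + b * w ^ 2 - a * t ^ 2 = 0 ∨ z ^ 2 + b * w ^ 2 - a * t ^ 2 = a * b := by
  obtain ⟨k, hk⟩ := hdvd
  have hk_gt : -1 < k := by
    refine lt_of_mul_lt_mul_left (a := a * b) ?_ (by positivity)
    have : a * t ^ 2 < a * b := by gcongr
    have : 0 ≤ z ^ 2 + b * w ^ 2 := by positivity
    linarith
  have hk_lt : k < 2 := by
    refine lt_of_mul_lt_mul_left (a := a * b) ?_ (by positivity)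
    have : b * w ^ 2 ≤ b * a := by gcongr
    have : 0 ≤ a * t ^ 2 := by positivity
    linarith
  obtain rfl | rfl : k = 0 ∨ k = 1 := by omega
  · exact .inl (by rw [hk, mul_zero])
  · exact .inr (by rw [hk, mul_one])

/-- A case of **Legendre's theorem** on ternary quadratic forms. -/
theorem exists_mul_sq_eq_sq_add_mul_sq {a b : ℕ} (hab : a.Coprime b) (hb : ¬ IsSquare b)
    (hsq_a : IsSquare (a : ZMod b)) (hsq_b : IsSquare (-b : ZMod a)) :
    ∃ t z w : ℤ, t ≠ 0 ∧ a * t ^ 2 = z ^ 2 + b * w ^ 2 := by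
  have hb0 : b ≠ 0 := by rintro rfl; simp at hb
  have ha0 : a ≠ 0 := by rintro rfl; simp_all
  have : NeZero a := ⟨ha0⟩
  have : NeZero b := ⟨hb0⟩
  obtain ⟨z, w, t, hne, hz, hw, ht, hdvd⟩ := exists_ne_zero_sq_le_mul_dvd hab hsq_a hsq_b
  have ht_lt : t ^ 2 < b := ht.lt_of_ne fun h ↦
    hb (Int.isSquare_natCast_iff.mp ⟨t, by rw [← h, sq]⟩)
  have hz_lt : z ^ 2 < a * b := hz.lt_of_ne fun h ↦
    hb (isSquare_right_of_coprime_of_isSquare_mul hab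
      (Int.isSquare_natCast_iff.mp ⟨z, by push_cast; rw [← h, sq]⟩))
  obtain h | h := eq_zero_or_eq_mul_of_mul_dvd (by positivity) (by positivity) hz_lt hw ht_lt hdvd
  · refine ⟨t, z, w, ?_, by linarith⟩
    rintro rfl
    have hzw : z ^ 2 + b * w ^ 2 = 0 := by linarith
    rw [add_eq_zero_iff_of_nonneg (by positivity) (by positivity)] at hzw
    simp_all
  -- Multiply `a * (t ^ 2 + b) = z ^ 2 + b * w ^ 2` by `t ^ 2 + b` (Brahmagupta's identity).
  · refine ⟨t ^ 2 + b, z * t - b * w, z + w * t, by positivity, ?_⟩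
    linear_combination -(t ^ 2 + b) * h

end Legendre

section ThreeSquares

lemma exists_prime_mod_four_eq_one_and_dvd_add_one {n : ℕ} (hn : n % 4 = 1) :
    ∃ q : ℕ, q.Prime ∧ q % 4 = 1 ∧ n ∣ q + 1 := by
  have hcop : IsCoprime (2 * n - 1 : ℤ) ((4 * n : ℕ) : ℤ) :=
    ⟨-(2 * n + 1), n, by push_cast; ring⟩
  obtain ⟨q, -, hq, hmod⟩ := Nat.forall_exists_prime_gt_and_zmodEq 0 (by omega) hcop
  obtain ⟨j, hj⟩ := hmod.symm.dvd
  push_cast at hj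
  refine ⟨q, hq, ?_, ?_⟩
  · have : (q : ℤ) = 2 * n - 1 + 4 * (n * j) := by linear_combination hj
    omega
  · have : (n : ℤ) ∣ q + 1 := ⟨2 + 4 * j, by linear_combination hj⟩
    exact_mod_cast this

lemma natCast_zmod_eq_neg_one_of_dvd_add_one {n q : ℕ} (h : n ∣ q + 1) : (q : ZMod n) = -1 := by
  rw [eq_neg_iff_add_eq_zero]
  exact_mod_cast (ZMod.natCast_eq_zero_iff (q + 1) n).mpr h

lemma isSquare_natCast_of_dvd_add_one {n q : ℕ} [Fact q.Prime] (hn : n % 4 = 1) (hq : Odd q)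
    (h : n ∣ q + 1) : IsSquare (n : ZMod q) := by
  suffices jacobiSym n q = 1 by
    exact_mod_cast ZMod.isSquare_of_jacobiSym_eq_one this
  have hmod : (q : ℤ) % n = -1 % n :=
    Int.ModEq.symm (Int.modEq_iff_dvd.mpr (by simpa using Int.natCast_dvd_natCast.mpr h))
  calc jacobiSym n q = jacobiSym q n := jacobiSym.quadratic_reciprocity_one_mod_four hn hq
    _ = jacobiSym (-1) n := jacobiSym.mod_left' hmod
    _ = ZMod.χ₄ n := jacobiSym.at_neg_one (Nat.odd_iff.mpr (by omega))
    _ = 1 := ZMod.χ₄_nat_one_mod_four hn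

/-- The case `n ≡ 1 [MOD 4]` of **Legendre's three-square theorem**. -/
theorem exists_sum_three_sq_of_mod_four_eq_one {n : ℕ} (hn : n % 4 = 1) :
    ∃ a b c : ℤ, (n : ℤ) = a ^ 2 + b ^ 2 + c ^ 2 := by
  obtain ⟨q, hq, hq4, hdvd⟩ := exists_prime_mod_four_eq_one_and_dvd_add_one hn
  have : Fact q.Prime := ⟨hq⟩
  have hcop : n.Coprime q := Nat.Coprime.of_dvd_left hdvd (by simp)
  have hsq_n : IsSquare (n : ZMod q) :=
    isSquare_natCast_of_dvd_add_one hn (Nat.odd_iff.mpr (by omega)) hdvd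
  have hsq_q : IsSquare (-q : ZMod n) := by
    simp [natCast_zmod_eq_neg_one_of_dvd_add_one hdvd]
  obtain ⟨t, z, w, ht, h⟩ :=
    exists_mul_sq_eq_sq_add_mul_sq hcop hq.prime.not_isSquare hsq_n hsq_q
  obtain ⟨c, d, hcd⟩ := Nat.Prime.sq_add_sq (p := q) (by omega)
  refine exists_sum_three_sq_of_mul_sq_eq (x := z) (y := c * w) (z := d * w) ht ?_
  rw [h, ← hcd]
  push_cast
  ring

end ThreeSquares

lemma even_and_even_of_four_dvd_sq_add_sq {a b : ℤ} (h : 4 ∣ a ^ 2 + b ^ 2) : Even a ∧ Even b := by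
  obtain ⟨a, rfl | rfl⟩ := a.even_or_odd' <;> obtain ⟨b, rfl | rfl⟩ := b.even_or_odd'
  · simp
  all_goals
    ring_nf at h
    omega

lemma exists_two_mul_sq_add_two_mul_sq_add_odd_sq {m a b c : ℤ}
    (h : 4 * m + 1 = a ^ 2 + b ^ 2 + c ^ 2) :
    ∃ x y z : ℤ, 4 * m + 1 = (2 * x) ^ 2 + (2 * y) ^ 2 + (2 * z + 1) ^ 2 := by
  have of_odd {a b c : ℤ} (hc : Odd c) (h : 4 * m + 1 = a ^ 2 + b ^ 2 + c ^ 2) :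
      ∃ x y z : ℤ, 4 * m + 1 = (2 * x) ^ 2 + (2 * y) ^ 2 + (2 * z + 1) ^ 2 := by
    obtain ⟨z, rfl⟩ := hc
    obtain ⟨ha, hb⟩ := even_and_even_of_four_dvd_sq_add_sq (a := a) (b := b)
      ⟨m - z ^ 2 - z, by linear_combination -h⟩
    obtain ⟨x, rfl⟩ := ha.two_dvd
    obtain ⟨y, rfl⟩ := hb.two_dvd
    exact ⟨x, y, z, h⟩
  have hodd : Odd a ∨ Odd b ∨ Odd c := by
    by_contra! heven
    simp only [Int.not_odd_iff_even] at heven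
    have : Even (4 * m + 1) := by
      simp only [h, Int.even_add, Int.even_pow, heven, true_and, ne_eq, two_ne_zero,
        not_false_eq_true]
    obtain ⟨k, hk⟩ := this
    omega
  obtain ha | hb | hc := hodd
  · exact of_odd ha (a := b) (b := c) (by linarith)
  · exact of_odd hb (a := a) (b := c) (by linarith)
  · exact of_odd hc h

lemma two_mul_T (k : ℕ) : 2 * T k = k * (k + 1) :=
  Nat.mul_div_cancel' (Nat.even_mul_succ_self k).two_dvd

/- For negative `a` this is the symmetry `a ↦ -a - 1` of `a * (a + 1)`. -/
lemma exists_two_mul_T_eq (a : ℤ) : ∃ k : ℕ, 2 * (T k : ℤ) = a * (a + 1) := by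
  have two_mul_T_cast (k : ℕ) : 2 * (T k : ℤ) = k * (k + 1) := by exact_mod_cast two_mul_T k
  obtain k | k := a
  · exact ⟨k, two_mul_T_cast k⟩
  · exact ⟨k, by rw [two_mul_T_cast, Int.negSucc_eq]; ring⟩

lemma exists_T_add_T_eq (b c : ℤ) : ∃ y z : ℕ, (T y + T z : ℤ) = b ^ 2 + c ^ 2 + c := by
  obtain ⟨y, hy⟩ := exists_two_mul_T_eq (b + c)
  obtain ⟨z, hz⟩ := exists_two_mul_T_eq (c - b)
  exact ⟨y, z, by linarith⟩

theorem stmt_4 (m : ℕ) : ∃ x y z : ℕ, m = x ^ 2 + T y + T z := by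
  obtain ⟨_, _, _, h⟩ := exists_sum_three_sq_of_mod_four_eq_one (n := 4 * m + 1) (by omega)
  push_cast at h
  obtain ⟨x, b, c, hxbc⟩ := exists_two_mul_sq_add_two_mul_sq_add_odd_sq h
  obtain ⟨y, z, hyz⟩ := exists_T_add_T_eq b c
  refine ⟨x.natAbs, y, z, ?_⟩
  zify
  rw [sq_abs]
  linarith
end

section
/- If n is a non-negative integer such that 8n + 3 is divisible by 25, by 169, or by 61² = 3721, then n can be written as n = T_x + T_y + T_z where x and y have different parity. -/
/-!
Since `(2 * k + 1) ^ 2 = 8 * T k + 1`, one has to write `8 * n + 3` as a sum of three odd squares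
`u ^ 2 + v ^ 2 + w ^ 2`, and `T`-indices of different parity correspond to `4 ∣ u + v`.

Let `c ^ 2 + d ^ 2 = p ^ 2` with `c` odd and `c < d`, as for `(3, 4, 5)`, `(5, 12, 13)` and
`(11, 60, 61)`. The quotient `m = (8 * n + 3) / p ^ 2` is `3` modulo `8`, hence by Gauss a sum of
three odd squares, and the roots of two of them, `z ≤ y`, agree modulo `4`. Multiplying
`y + z * I` by `d + c * I` gives the roots `u = c * y + d * z` and `v = d * y - c * z` of a
representation of `p ^ 2 * m`; as `4 ∣ d`, their sum is `c * (y - z) = 0` modulo `4`.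

For Gauss' theorem, Dirichlet's theorem and quadratic reciprocity provide `d` such that `-d` is a
square modulo `d * n - 1`, which produces a positive definite integral ternary form of determinant
one representing `n`. By Hermite's bound on the minimum of a form, obtained by projecting along a
minimal vector and induction on the dimension, such a form is equivalent to `x ^ 2 + y ^ 2 + z ^ 2`.
-/

open Matrix

section Congruence

variable {R : Type*} [CommRing R]

/-- Congruence of square matrices over a ring, that is, equality of the bilinear forms they define
up to a change of basis. -/
def IsCongruent {ι : Type*} [Fintype ι] [DecidableEq ι] (A B : Matrix ι ι R) : Prop :=
  ∃ P : Matrix ι ι R, IsUnit P ∧ Pᵀ * A * P = B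

namespace IsCongruent

variable {ι : Type*} [Fintype ι] [DecidableEq ι]

theorem refl (A : Matrix ι ι R) : IsCongruent A A :=
  ⟨1, isUnit_one, by simp⟩

theorem trans {A B C : Matrix ι ι R} (hAB : IsCongruent A B) (hBC : IsCongruent B C) :
    IsCongruent A C := by
  obtain ⟨P, hP, rfl⟩ := hAB
  obtain ⟨Q, hQ, rfl⟩ := hBC
  exact ⟨P * Q, hP.mul hQ, by simp only [transpose_mul, Matrix.mul_assoc]⟩

theorem symm {A B : Matrix ι ι R} (hAB : IsCongruent A B) : IsCongruent B A := by
  obtain ⟨P, hP, rfl⟩ := hAB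
  have hdet := (isUnit_iff_isUnit_det P).mp hP
  refine ⟨P⁻¹, by simpa using hP, ?_⟩
  rw [transpose_nonsing_inv, Matrix.mul_assoc, mul_nonsing_inv_cancel_right _ _ hdet,
    nonsing_inv_mul_cancel_left _ _ (by rwa [det_transpose])]

theorem submatrix_perm (A : Matrix ι ι R) (σ : Equiv.Perm ι) :
    IsCongruent A (A.submatrix σ σ) := by
  refine ⟨(1 : Matrix ι ι R).submatrix id σ, ?_, ?_⟩
  · exact (isUnit_submatrix_equiv (Equiv.refl ι) σ).mpr isUnit_one
  · ext i j
    simp [mul_apply, one_apply]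

theorem det_eq {A B : Matrix ι ι ℤ} (hAB : IsCongruent A B) : B.det = A.det := by
  obtain ⟨P, hP, rfl⟩ := hAB
  rw [det_mul, det_mul, det_transpose, mul_right_comm, ← sq,
    Int.isUnit_sq ((isUnit_iff_isUnit_det P).mp hP), one_mul]

theorem posDef {A B : Matrix ι ι ℤ} (hAB : IsCongruent A B) (hA : A.PosDef) : B.PosDef := by
  obtain ⟨P, hP, rfl⟩ := hAB
  rw [← conjTranspose_eq_transpose_of_trivial]
  exact hA.conjTranspose_mul_mul_same (mulVec_injective_of_isUnit hP)

end IsCongruent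

variable {n : ℕ}

/-- Chiò's pivotal condensation: the matrix of the `2 × 2` minors through the top left entry. It is
`A 0 0` times the Schur complement of that entry, so that no division is needed. For symmetric `A`
it is the matrix, up to that factor, of the form projected along the first basis vector. -/
def chioCondensation (A : Matrix (Fin (n + 1)) (Fin (n + 1)) R) : Matrix (Fin n) (Fin n) R :=
  of fun i j => A 0 0 * A i.succ j.succ - A i.succ 0 * A 0 j.succ

/-- The block matrix `[1, u; 0, V]`, which extends a change of basis `V` of a quotient by the first
basis vector. -/
def unitBorder (u : Fin n → R) (V : Matrix (Fin n) (Fin n) R) :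
    Matrix (Fin (n + 1)) (Fin (n + 1)) R :=
  of (vecCons (vecCons 1 u) fun i => vecCons 0 (V i))

theorem det_unitBorder (u : Fin n → R) (V : Matrix (Fin n) (Fin n) R) :
    (unitBorder u V).det = V.det := by
  have hpivot : unitBorder u V 0 0 = 1 := rfl
  have hcol (i : Fin n) : unitBorder u V i.succ 0 = 0 := rfl
  have hminor : (unitBorder u V).submatrix Fin.succ Fin.succ = V := rfl
  simp [det_succ_column_zero, Fin.sum_univ_succ, hpivot, hcol, hminor]

theorem mul_unitBorder_apply_zero (A : Matrix (Fin (n + 1)) (Fin (n + 1)) R) (u : Fin n → R)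
    (V : Matrix (Fin n) (Fin n) R) (i : Fin (n + 1)) : (A * unitBorder u V) i 0 = A i 0 := by
  simp [mul_apply, unitBorder, Fin.sum_univ_succ]

theorem mul_unitBorder_apply_succ (A : Matrix (Fin (n + 1)) (Fin (n + 1)) R) (u : Fin n → R)
    (V : Matrix (Fin n) (Fin n) R) (i : Fin (n + 1)) (j : Fin n) :
    (A * unitBorder u V) i j.succ = A i 0 * u j + ∑ k : Fin n, A i k.succ * V k j := by
  simp [mul_apply, unitBorder, Fin.sum_univ_succ]

theorem chioCondensation_transpose (A : Matrix (Fin (n + 1)) (Fin (n + 1)) R) :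
    chioCondensation Aᵀ = (chioCondensation A)ᵀ := by
  ext i j
  simp [chioCondensation, mul_comm]

theorem isSymm_chioCondensation {A : Matrix (Fin (n + 1)) (Fin (n + 1)) R} (hA : A.IsSymm) :
    (chioCondensation A).IsSymm := by
  rw [IsSymm, ← chioCondensation_transpose, hA.eq]

theorem chioCondensation_mul_unitBorder (A : Matrix (Fin (n + 1)) (Fin (n + 1)) R)
    (u : Fin n → R) (V : Matrix (Fin n) (Fin n) R) :
    chioCondensation (A * unitBorder u V) = chioCondensation A * V := by
  ext i j
  simp only [chioCondensation, of_apply, mul_unitBorder_apply_zero, mul_unitBorder_apply_succ]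
  simp only [mul_apply, of_apply, sub_mul, Finset.sum_sub_distrib, mul_assoc, ← Finset.mul_sum]
  ring

theorem chioCondensation_transpose_mul_mul_unitBorder
    (A : Matrix (Fin (n + 1)) (Fin (n + 1)) R) (u : Fin n → R) (V : Matrix (Fin n) (Fin n) R) :
    chioCondensation ((unitBorder u V)ᵀ * A * unitBorder u V) = Vᵀ * chioCondensation A * V := by
  rw [chioCondensation_mul_unitBorder, ← transpose_transpose ((unitBorder u V)ᵀ * A),
    chioCondensation_transpose, transpose_mul, transpose_transpose,
    chioCondensation_mul_unitBorder, chioCondensation_transpose, transpose_mul,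
    transpose_transpose]

/-- Chiò's identity, with one factor `A 0 0` on both sides to avoid the exponent `n - 1`. -/
theorem mul_det_chioCondensation (A : Matrix (Fin (n + 1)) (Fin (n + 1)) R) :
    A 0 0 * (chioCondensation A).det = A 0 0 ^ n * A.det := by
  set P := unitBorder (fun j => -A 0 j.succ) (A 0 0 • (1 : Matrix (Fin n) (Fin n) R))
  have hrow (j : Fin n) : (A * P) 0 j.succ = 0 := by
    simp [P, mul_unitBorder_apply_succ, one_apply, mul_comm]
  have hminor : (A * P).submatrix Fin.succ Fin.succ = chioCondensation A := by
    ext i j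
    simp [P, mul_unitBorder_apply_succ, one_apply, chioCondensation]
    ring
  calc A 0 0 * (chioCondensation A).det = (A * P).det := by
        rw [det_succ_row_zero, Fin.sum_univ_succ]
        simp [hrow, ← hminor, P, mul_unitBorder_apply_zero]
    _ = A 0 0 ^ n * A.det := by
        rw [det_mul, det_unitBorder, det_smul, det_one, Fintype.card_fin]
        ring

theorem mul_dotProduct_mulVec_vecCons {A : Matrix (Fin (n + 1)) (Fin (n + 1)) R}
    (hA : A.IsSymm) (x₀ : R) (t : Fin n → R) :
    A 0 0 * (vecCons x₀ t ⬝ᵥ A *ᵥ vecCons x₀ t) =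
      (A 0 0 * x₀ + (fun j => A 0 (Fin.succ j)) ⬝ᵥ t) ^ 2 + t ⬝ᵥ chioCondensation A *ᵥ t := by
  set r : Fin n → R := fun j => A 0 j.succ
  set N := A.submatrix Fin.succ Fin.succ
  have hchio : chioCondensation A = A 0 0 • N - vecMulVec r r := by
    ext i j
    simp [chioCondensation, vecMulVec, hA.apply 0 i.succ, r, N]
  have hhead : vecHead (A *ᵥ vecCons x₀ t) = A 0 0 * x₀ + r ⬝ᵥ t := by
    simp [mulVec, dotProduct, Fin.sum_univ_succ, r, vecHead]
  have htail : vecTail (A *ᵥ vecCons x₀ t) = x₀ • r + N *ᵥ t := by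
    ext i
    simp [mulVec, dotProduct, Fin.sum_univ_succ, r, N, vecTail, hA.apply 0 i.succ, mul_comm x₀]
  have hchio_form : t ⬝ᵥ chioCondensation A *ᵥ t = A 0 0 * (t ⬝ᵥ N *ᵥ t) - (r ⬝ᵥ t) ^ 2 := by
    simp [hchio, sub_mulVec, smul_mulVec, vecMulVec_mulVec, dotProduct_sub, dotProduct_comm t r, sq]
  rw [cons_dotProduct, hhead, htail, hchio_form, dotProduct_add, dotProduct_smul, smul_eq_mul,
    dotProduct_comm t r]
  ring

theorem eq_one_of_chioCondensation_eq_one {A : Matrix (Fin (n + 1)) (Fin (n + 1)) R}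
    (hA : A.IsSymm) (h₀ : A 0 0 = 1) (hrow : ∀ j : Fin n, A 0 j.succ = 0)
    (hchio : chioCondensation A = 1) : A = 1 := by
  have hcol (i : Fin n) : A i.succ 0 = 0 := by rw [hA.apply, hrow]
  ext i j
  cases i using Fin.cases <;> cases j using Fin.cases
  · simp [h₀]
  · simp [hrow, (Fin.succ_ne_zero _).symm]
  · simp [hcol]
  · rename_i i j
    have := congr_fun₂ hchio i j
    simpa [chioCondensation, h₀, hcol, one_apply] using this

end Congruence

section Hermite

variable {n : ℕ}

theorem posDef_chioCondensation {A : Matrix (Fin (n + 1)) (Fin (n + 1)) ℤ} (hA : A.PosDef) :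
    (chioCondensation A).PosDef := by
  have hA_symm : A.IsSymm := hA.isHermitian
  have ha : 0 < A 0 0 := hA.diag_pos
  refine .of_dotProduct_mulVec_pos (isSymm_chioCondensation hA_symm) fun t ht => ?_
  -- The lift of `t` orthogonal to the first basis vector, scaled by `A 0 0` to be integral.
  set x := vecCons (-((fun j => A 0 (Fin.succ j)) ⬝ᵥ t)) (A 0 0 • t)
  have hx : x ≠ 0 := fun h => ht ((smul_eq_zero.mp (congrArg vecTail h)).resolve_left ha.ne')
  have hx_form : A 0 0 * (x ⬝ᵥ A *ᵥ x) = A 0 0 * (A 0 0 * (t ⬝ᵥ chioCondensation A *ᵥ t)) := by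
    rw [mul_dotProduct_mulVec_vecCons hA_symm]
    simp only [dotProduct_smul, smul_dotProduct, mulVec_smul, smul_eq_mul]
    ring
  have hx_pos : 0 < x ⬝ᵥ A *ᵥ x := hA.dotProduct_mulVec_pos hx
  rw [mul_left_cancel₀ ha.ne' hx_form] at hx_pos
  exact pos_of_mul_pos_right hx_pos ha.le

theorem posDef_of_posDef_chioCondensation {A : Matrix (Fin (n + 1)) (Fin (n + 1)) ℤ}
    (hA : A.IsSymm) (ha : 0 < A 0 0) (hchio : (chioCondensation A).PosDef) : A.PosDef := by
  refine .of_dotProduct_mulVec_pos hA fun x hx => pos_of_mul_pos_right (a := A 0 0) ?_ ha.le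
  obtain ⟨x₀, t, rfl⟩ : ∃ x₀ t, x = vecCons x₀ t := ⟨_, _, (cons_head_tail x).symm⟩
  rw [star_trivial, mul_dotProduct_mulVec_vecCons hA]
  rcases eq_or_ne t 0 with rfl | ht
  · have hx₀ : x₀ ≠ 0 := by
      rintro rfl
      exact hx cons_zero_zero
    simpa only [dotProduct_zero, mulVec_zero, add_zero] using
      sq_pos_of_ne_zero (mul_ne_zero ha.ne' hx₀)
  · exact add_pos_of_nonneg_of_pos (sq_nonneg _) (hchio.dotProduct_mulVec_pos ht)

theorem exists_abs_two_mul_add_mul_le {a : ℤ} (ha : 0 < a) (x : ℤ) :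
    ∃ k : ℤ, |2 * (a * k + x)| ≤ a := by
  refine ⟨-((2 * x + a) / (2 * a)), ?_⟩
  have h₁ := Int.mul_ediv_self_le (x := 2 * x + a) (k := 2 * a) (by positivity)
  have h₂ := Int.lt_mul_ediv_self_add (x := 2 * x + a) (k := 2 * a) (by positivity)
  rw [abs_le]
  constructor <;> linarith

/-- A change of basis of the projected form lifts to one of the form itself, and the lift can be
chosen so that the new basis vectors have small product with the first one. -/
theorem IsCongruent.exists_lift {A : Matrix (Fin (n + 1)) (Fin (n + 1)) ℤ} (ha : 0 < A 0 0)
    {W : Matrix (Fin n) (Fin n) ℤ} (hW : IsCongruent (chioCondensation A) W) :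
    ∃ B, IsCongruent A B ∧ B 0 0 = A 0 0 ∧ chioCondensation B = W ∧
      ∀ j : Fin n, |2 * B 0 j.succ| ≤ A 0 0 := by
  obtain ⟨V, hV, rfl⟩ := hW
  choose u hu using fun j => exists_abs_two_mul_add_mul_le ha (∑ k : Fin n, A 0 k.succ * V k j)
  set P := unitBorder u V
  have hP : IsUnit P := by
    rwa [isUnit_iff_isUnit_det, det_unitBorder, ← isUnit_iff_isUnit_det]
  have hrow (j) : (Pᵀ * A * P) 0 j = (A * P) 0 j := by
    rw [Matrix.mul_assoc, ← transpose_transpose (A * P), ← transpose_mul, transpose_apply,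
      mul_unitBorder_apply_zero, transpose_transpose, transpose_apply]
  refine ⟨Pᵀ * A * P, ⟨P, hP, rfl⟩, ?_, chioCondensation_transpose_mul_mul_unitBorder A u V, ?_⟩
  · rw [hrow, mul_unitBorder_apply_zero]
  · intro j
    rw [hrow, mul_unitBorder_apply_succ]
    exact hu j

theorem exists_isCongruent_forall_apply_zero_zero_le {A : Matrix (Fin (n + 1)) (Fin (n + 1)) ℤ}
    (hA : A.PosDef) :
    ∃ B, IsCongruent A B ∧ ∀ C, IsCongruent A C → B 0 0 ≤ C 0 0 := by
  obtain ⟨m, ⟨B, hAB, rfl⟩, hmin⟩ := Int.exists_least_of_bdd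
    (P := fun m => ∃ B, IsCongruent A B ∧ B 0 0 = m)
    ⟨0, by rintro _ ⟨B, hAB, rfl⟩; exact (hAB.posDef hA).diag_pos.le⟩ ⟨_, A, .refl A, rfl⟩
  exact ⟨B, hAB, fun C hAC => hmin _ ⟨C, hAC, rfl⟩⟩

/-- Hermite's bound `B 0 0 ≤ (4 / 3) ^ (n / 2) * A.det ^ (1 / (n + 1))`. -/
theorem exists_isCongruent_pow_apply_zero_zero_le {A : Matrix (Fin (n + 1)) (Fin (n + 1)) ℤ}
    (hA : A.PosDef) :
    ∃ B, IsCongruent A B ∧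
      3 ^ (n + 1).choose 2 * B 0 0 ^ (n + 1) ≤ 4 ^ (n + 1).choose 2 * A.det := by
  induction n with
  | zero => exact ⟨A, .refl A, by simp⟩
  | succ n ih =>
    obtain ⟨B, hAB, hmin⟩ := exists_isCongruent_forall_apply_zero_zero_le hA
    have hB := hAB.posDef hA
    have ha : 0 < B 0 0 := hB.diag_pos
    obtain ⟨W, hBW, hW⟩ := ih (posDef_chioCondensation hB)
    obtain ⟨C, hBC, hC₀, rfl, hC⟩ := hBW.exists_lift ha
    have hC_symm : C.IsSymm := (hBC.posDef hB).isHermitian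
    have hC₁ : B 0 0 ≤ C 1 1 :=
      hmin _ ((hAB.trans hBC).trans (.submatrix_perm C (Equiv.swap 0 1)))
    have hle : 3 * B 0 0 ^ 2 ≤ 4 * chioCondensation C 0 0 := by
      have hoff : (2 * C 0 1) ^ 2 ≤ B 0 0 ^ 2 := sq_le_sq.mpr ((hC 0).trans (le_abs_self _))
      have hchio : chioCondensation C 0 0 = B 0 0 * C 1 1 - C 0 1 ^ 2 := by
        simp [chioCondensation, hC₀, hC_symm.apply 0 1, sq]
      rw [hchio]
      nlinarith
    have hdet : (chioCondensation B).det = B 0 0 ^ n * A.det := by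
      refine mul_left_cancel₀ ha.ne' ?_
      rw [mul_det_chioCondensation, hAB.det_eq]
      ring
    refine ⟨B, hAB, le_of_mul_le_mul_left ?_ (pow_pos ha n)⟩
    rw [Nat.choose_succ_succ' (n + 1), Nat.choose_one_right, pow_add 3, pow_add 4 (n + 1)]
    calc B 0 0 ^ n * (3 ^ (n + 1) * 3 ^ (n + 1).choose 2 * B 0 0 ^ (n + 1 + 1))
        = 3 ^ (n + 1).choose 2 * (3 * B 0 0 ^ 2) ^ (n + 1) := by ring
      _ ≤ 3 ^ (n + 1).choose 2 * (4 * chioCondensation C 0 0) ^ (n + 1) := by gcongr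
      _ = 4 ^ (n + 1) * (3 ^ (n + 1).choose 2 * chioCondensation C 0 0 ^ (n + 1)) := by ring
      _ ≤ 4 ^ (n + 1) * (4 ^ (n + 1).choose 2 * (B 0 0 ^ n * A.det)) := by
        rw [← hdet]; gcongr
      _ = B 0 0 ^ n * (4 ^ (n + 1) * 4 ^ (n + 1).choose 2 * A.det) := by ring

theorem exists_isCongruent_apply_zero_zero_eq_one (hn : n < 5)
    {A : Matrix (Fin (n + 1)) (Fin (n + 1)) ℤ} (hA : A.PosDef) (hdet : A.det = 1) :
    ∃ B, IsCongruent A B ∧ B 0 0 = 1 := by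
  obtain ⟨B, hAB, hB⟩ := exists_isCongruent_pow_apply_zero_zero_le hA
  have hpos : 0 < B 0 0 := (hAB.posDef hA).diag_pos
  refine ⟨B, hAB, le_antisymm (not_lt.mp fun htwo : 2 ≤ B 0 0 => ?_) hpos⟩
  have hpow : 3 ^ (n + 1).choose 2 * 2 ^ (n + 1) ≤ (4 ^ (n + 1).choose 2 : ℤ) :=
    calc (3 ^ (n + 1).choose 2 * 2 ^ (n + 1) : ℤ)
        ≤ 3 ^ (n + 1).choose 2 * B 0 0 ^ (n + 1) := by gcongr
      _ ≤ 4 ^ (n + 1).choose 2 := by simpa [hdet] using hB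
  interval_cases n <;> norm_num [Nat.choose] at hpow

theorem isCongruent_one_of_det_eq_one (hn : n ≤ 5) {A : Matrix (Fin n) (Fin n) ℤ}
    (hA : A.PosDef) (hdet : A.det = 1) : IsCongruent A 1 := by
  induction n with
  | zero => rw [Subsingleton.elim A 1]; exact .refl 1
  | succ n ih =>
    obtain ⟨B, hAB, hB₀⟩ := exists_isCongruent_apply_zero_zero_eq_one hn hA hdet
    have hB := hAB.posDef hA
    have hchio : IsCongruent (chioCondensation B) 1 := by
      refine ih (by lia) (posDef_chioCondensation hB) ?_
      simpa [hB₀, hAB.det_eq, hdet] using mul_det_chioCondensation B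
    obtain ⟨C, hBC, hC₀, hC, hrow⟩ := hchio.exists_lift hB.diag_pos
    rw [hB₀] at hC₀ hrow
    have hC_one : C = 1 := eq_one_of_chioCondensation_eq_one (hBC.posDef hB).isHermitian hC₀
      (fun j => by have := abs_le.mp (hrow j); lia) hC
    exact hC_one ▸ hAB.trans hBC

theorem exists_eq_transpose_mul_self_of_det_eq_one (hn : n ≤ 5) {A : Matrix (Fin n) (Fin n) ℤ}
    (hA : A.PosDef) (hdet : A.det = 1) : ∃ U : Matrix (Fin n) (Fin n) ℤ, A = Uᵀ * U := by
  obtain ⟨U, -, hU⟩ := (isCongruent_one_of_det_eq_one hn hA hdet).symm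
  exact ⟨U, by simpa using hU.symm⟩

end Hermite

section SumOfThreeSquares

theorem exists_eq_sum_three_sq_of_dvd {n d s : ℤ} (hd : 0 < d) (hdn : 0 < d * n - 1)
    (h : d * n - 1 ∣ s ^ 2 + d) : ∃ u v w : ℤ, n = u ^ 2 + v ^ 2 + w ^ 2 := by
  obtain ⟨a, ha⟩ := h
  have ha_pos : 0 < a := pos_of_mul_pos_right (ha ▸ by positivity) hdn.le
  let A : Matrix (Fin 3) (Fin 3) ℤ := !![a, s, 1; s, d * n - 1, 0; 1, 0, n]
  have hA_symm : A.IsSymm := by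
    ext i j
    fin_cases i <;> fin_cases j <;> rfl
  have hA_det : A.det = 1 := by
    simp only [A, det_fin_three, of_apply, cons_val]
    linear_combination -n * ha
  have hchio : chioCondensation A = !![d, -s; -s, a * n - 1] := by
    ext i j
    fin_cases i <;> fin_cases j <;> simp [chioCondensation, A]
    linear_combination -ha
  have hchio_chio : chioCondensation (chioCondensation A) = !![a] := by
    rw [hchio]
    ext i j
    fin_cases i
    fin_cases j
    simp [chioCondensation]
    linear_combination -ha
  have hA : A.PosDef := by
    refine posDef_of_posDef_chioCondensation hA_symm ha_pos ?_
    refine posDef_of_posDef_chioCondensation (isSymm_chioCondensation hA_symm) (hchio ▸ hd) ?_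
    rw [hchio_chio]
    refine posDef_of_posDef_chioCondensation (.ext fun i j => by simp) ha_pos ?_
    exact .of_dotProduct_mulVec_pos (Subsingleton.elim _ _)
      fun x hx => absurd (Subsingleton.elim x 0) hx
  obtain ⟨U, hU⟩ := exists_eq_transpose_mul_self_of_det_eq_one (by norm_num) hA hA_det
  refine ⟨U 0 2, U 1 2, U 2 2, ?_⟩
  simpa [A, mul_apply, Fin.sum_univ_three, sq] using congr_fun₂ hU 2 2

theorem exists_prime_two_mul_add_one_eq_mul {n : ℕ} (hn : n % 8 = 3) :
    ∃ p d : ℕ, p.Prime ∧ p % 4 = 1 ∧ d % 8 = 1 ∧ 2 * p + 1 = d * n := by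
  obtain ⟨m, rfl⟩ : ∃ m, n = 8 * m + 3 := ⟨n / 8, by lia⟩
  have hcop : (4 * m + 1).Coprime (4 * (8 * m + 3)) := by
    refine Nat.Coprime.mul_right ?_ ?_
    · simp
    · rw [show 8 * m + 3 = 1 + 2 * (4 * m + 1) by ring]
      simp
  obtain ⟨p, hgt, hp, hmod⟩ := Nat.forall_exists_prime_gt_and_modEq (4 * m + 1) (by lia) hcop
  obtain ⟨j, hj⟩ := (Nat.modEq_iff_dvd' hgt.le).mp hmod.symm
  obtain rfl : p = 4 * ((8 * m + 3) * j + m) + 1 := by lia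
  exact ⟨_, 8 * j + 1, hp, by lia, by lia, by ring⟩

theorem jacobiSym_neg_eq_one_of_dvd {p d : ℕ} (hp : p % 4 = 1) (hd : d % 8 = 1)
    (hdvd : d ∣ 2 * p + 1) : jacobiSym (-d) p = 1 := by
  have hp_odd : Odd p := Nat.odd_iff.mpr (by lia)
  have hd_odd : Odd d := Nat.odd_iff.mpr (by lia)
  have hneg_two : jacobiSym (-2) d = 1 := by
    rw [jacobiSym.at_neg_two hd_odd, ZMod.χ₈'_nat_eq_if_mod_eight]
    simp [hd, Nat.odd_iff.mp hd_odd]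
  have hneg_two_mul : jacobiSym (-2 * p) d = 1 := by
    have hmod : -2 * p ≡ 1 [ZMOD d] := by
      refine Int.modEq_iff_dvd.mpr ?_
      have : (d : ℤ) ∣ 2 * p + 1 := mod_cast hdvd
      convert this using 1
      ring
    rw [jacobiSym.mod_left, hmod.eq, ← jacobiSym.mod_left, jacobiSym.one_left]
  calc jacobiSym (-d) p = jacobiSym d p := by
        rw [jacobiSym.neg _ hp_odd, ZMod.χ₄_nat_one_mod_four hp, one_mul]
    _ = jacobiSym p d := (jacobiSym.quadratic_reciprocity_one_mod_four hp hd_odd).symm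
    _ = 1 := by rwa [jacobiSym.mul_left, hneg_two, one_mul] at hneg_two_mul

theorem exists_two_mul_dvd_sq_add {p : ℕ} {d : ℤ} (hp : Odd p) (hd : Odd d)
    (h : IsSquare ((-d : ℤ) : ZMod p)) : ∃ s : ℤ, 2 * (p : ℤ) ∣ s ^ 2 + d := by
  obtain ⟨t, ht⟩ := h
  obtain ⟨t, rfl⟩ := ZMod.intCast_surjective t
  have hpt : (p : ℤ) ∣ t ^ 2 + d := by
    rw [← ZMod.intCast_zmod_eq_zero_iff_dvd]
    push_cast at ht ⊢
    linear_combination -ht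
  have hcop : IsCoprime (2 : ℤ) p := mod_cast Nat.isCoprime_iff_coprime.mpr hp.coprime_two_left
  have hp' : Odd (p : ℤ) := mod_cast hp
  obtain ⟨s, hs, hps⟩ : ∃ s : ℤ, Odd s ∧ (p : ℤ) ∣ s ^ 2 + d := by
    rcases Int.even_or_odd t with ht_even | ht_odd
    · refine ⟨t + p, ht_even.add_odd hp', ?_⟩
      rw [show (t + p) ^ 2 + d = t ^ 2 + d + p * (2 * t + p) by ring]
      exact dvd_add hpt (dvd_mul_right _ _)
    · exact ⟨t, ht_odd, hpt⟩
  exact ⟨s, hcop.mul_dvd (hs.pow.add_odd hd).two_dvd hps⟩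

theorem exists_mul_sub_one_dvd_sq_add {n : ℕ} (hn : n % 8 = 3) :
    ∃ d s : ℤ, 0 < d ∧ 0 < d * n - 1 ∧ d * n - 1 ∣ s ^ 2 + d := by
  obtain ⟨p, d, hp, hp_mod, hd_mod, hpd⟩ := exists_prime_two_mul_add_one_eq_mul hn
  have : Fact p.Prime := ⟨hp⟩
  have hleg : legendreSym p (-d) = 1 := by
    rw [jacobiSym.legendreSym.to_jacobiSym]
    exact jacobiSym_neg_eq_one_of_dvd hp_mod hd_mod (hpd ▸ dvd_mul_right d n)
  have hsq : IsSquare ((-d : ℤ) : ZMod p) := by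
    refine (legendreSym.eq_one_iff p fun h₀ => ?_).mp hleg
    rw [(legendreSym.eq_zero_iff p _).mpr h₀] at hleg
    exact zero_ne_one hleg
  obtain ⟨s, hs⟩ := exists_two_mul_dvd_sq_add (Nat.odd_iff.mpr (by lia))
    (mod_cast Nat.odd_iff.mpr (by lia : d % 2 = 1)) hsq
  have hdn : (d * n - 1 : ℤ) = 2 * p := by
    have : (2 * p + 1 : ℤ) = d * n := mod_cast hpd
    linarith
  exact ⟨d, s, by lia, by have := hp.pos; lia, hdn ▸ hs⟩

theorem exists_eq_sum_three_sq_of_mod_eight_eq_three {n : ℕ} (hn : n % 8 = 3) :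
    ∃ x y z : ℕ, n = x ^ 2 + y ^ 2 + z ^ 2 := by
  obtain ⟨d, s, hd, hdn, hdvd⟩ := exists_mul_sub_one_dvd_sq_add hn
  obtain ⟨u, v, w, h⟩ := exists_eq_sum_three_sq_of_dvd hd hdn hdvd
  refine ⟨u.natAbs, v.natAbs, w.natAbs, ?_⟩
  zify
  simpa using h

theorem sq_mod_eight_cases (t : ℕ) :
    Odd t ∧ t ^ 2 % 8 = 1 ∨ 4 ∣ t ∧ t ^ 2 % 8 = 0 ∨ t % 4 = 2 ∧ t ^ 2 % 8 = 4 := by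
  have hsq : t ^ 2 % 8 = (t % 8) ^ 2 % 8 := Nat.pow_mod t 2 8
  have hlt : t % 8 < 8 := Nat.mod_lt t (by norm_num)
  rw [Nat.odd_iff]
  generalize hr : t % 8 = r at hsq hlt
  interval_cases r <;> lia

theorem exists_eq_sum_three_odd_sq_of_mod_eight_eq_three {n : ℕ} (hn : n % 8 = 3) :
    ∃ x y z : ℕ, n = x ^ 2 + y ^ 2 + z ^ 2 ∧ Odd x ∧ Odd y ∧ Odd z := by
  obtain ⟨x, y, z, h⟩ := exists_eq_sum_three_sq_of_mod_eight_eq_three hn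
  have hx := sq_mod_eight_cases x
  have hy := sq_mod_eight_cases y
  have hz := sq_mod_eight_cases z
  simp only [Nat.odd_iff] at *
  exact ⟨x, y, z, h, by lia, by lia, by lia⟩

end SumOfThreeSquares

section Rotation

theorem four_dvd_and_odd_of_sq_add_sq_eq_sq {c d p : ℕ} (h : c ^ 2 + d ^ 2 = p ^ 2)
    (hc : Odd c) : 4 ∣ d ∧ Odd p := by
  have hc_cases := sq_mod_eight_cases c
  have hd_cases := sq_mod_eight_cases d
  have hp_cases := sq_mod_eight_cases p
  simp only [Nat.odd_iff] at *
  lia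

theorem exists_sq_add_sq_four_dvd_add {c d p y z : ℕ} (hcdp : c ^ 2 + d ^ 2 = p ^ 2)
    (hc : Odd c) (hcd : c < d) (hy : Odd y) (hz : Odd z) (hyz : y % 4 = z % 4) :
    ∃ u v : ℕ, p ^ 2 * (y ^ 2 + z ^ 2) = u ^ 2 + v ^ 2 ∧ Odd u ∧ Odd v ∧ 4 ∣ u + v := by
  wlog hzy : z ≤ y generalizing y z
  · rw [add_comm (y ^ 2)]
    exact this hz hy hyz.symm (by lia)
  obtain ⟨e, rfl⟩ := (four_dvd_and_odd_of_sq_add_sq_eq_sq hcdp hc).1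
  have hlt : c * z < 4 * e * y := Nat.mul_lt_mul_of_lt_of_le hcd hzy hy.pos
  have heven (t : ℕ) : Even (4 * e * t) := ⟨2 * e * t, by ring⟩
  refine ⟨c * y + 4 * e * z, 4 * e * y - c * z, ?_, (hc.mul hy).add_even (heven z),
    Nat.Even.sub_odd hlt.le (heven y) (hc.mul hz), ?_⟩
  · zify [hlt.le] at hcdp ⊢
    linear_combination -(y ^ 2 + z ^ 2 : ℤ) * hcdp
  · obtain ⟨k, hk⟩ := (Nat.modEq_iff_dvd' hzy).mp hyz.symm
    obtain rfl : y = z + 4 * k := by lia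
    refine ⟨c * k + e * z + e * (z + 4 * k), ?_⟩
    zify [hlt.le]
    ring

theorem exists_sum_three_odd_sq_four_dvd_add {c d p x y z : ℕ} (hcdp : c ^ 2 + d ^ 2 = p ^ 2)
    (hc : Odd c) (hcd : c < d) (hx : Odd x) (hy : Odd y) (hz : Odd z) :
    ∃ u v w : ℕ, p ^ 2 * (x ^ 2 + y ^ 2 + z ^ 2) = u ^ 2 + v ^ 2 + w ^ 2 ∧
      Odd u ∧ Odd v ∧ Odd w ∧ 4 ∣ u + v := by
  have hp : Odd p := (four_dvd_and_odd_of_sq_add_sq_eq_sq hcdp hc).2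
  have hrotate {a b e : ℕ} (ha : Odd a) (hb : Odd b) (he : Odd e) (hab : a % 4 = b % 4) :
      ∃ u v w : ℕ, p ^ 2 * (a ^ 2 + b ^ 2 + e ^ 2) = u ^ 2 + v ^ 2 + w ^ 2 ∧
        Odd u ∧ Odd v ∧ Odd w ∧ 4 ∣ u + v := by
    obtain ⟨u, v, h, hu, hv, huv⟩ := exists_sq_add_sq_four_dvd_add hcdp hc hcd ha hb hab
    exact ⟨u, v, p * e, by rw [mul_add, h, mul_pow], hu, hv, hp.mul he, huv⟩
  have hpigeonhole : x % 4 = y % 4 ∨ y % 4 = z % 4 ∨ z % 4 = x % 4 := by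
    rw [Nat.odd_iff] at hx hy hz
    lia
  rcases hpigeonhole with hxy | hyz | hzx
  · exact hrotate hx hy hz hxy
  · rw [show x ^ 2 + y ^ 2 + z ^ 2 = y ^ 2 + z ^ 2 + x ^ 2 by ring]
    exact hrotate hy hz hx hyz
  · rw [show x ^ 2 + y ^ 2 + z ^ 2 = z ^ 2 + x ^ 2 + y ^ 2 by ring]
    exact hrotate hz hx hy hzx

end Rotation

theorem eight_mul_T_add_one (k : ℕ) : 8 * T k + 1 = (2 * k + 1) ^ 2 := by
  have h : 2 * T k = k * (k + 1) := Nat.mul_div_cancel' (Nat.even_mul_succ_self k).two_dvd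
  linear_combination 4 * h

theorem exists_eq_add_T_of_odd_sq {n u v w : ℕ} (h : 8 * n + 3 = u ^ 2 + v ^ 2 + w ^ 2)
    (hu : Odd u) (hv : Odd v) (hw : Odd w) (huv : 4 ∣ u + v) :
    ∃ x y z : ℕ, n = T x + T y + T z ∧ x % 2 ≠ y % 2 := by
  obtain ⟨x, rfl⟩ := hu
  obtain ⟨y, rfl⟩ := hv
  obtain ⟨z, rfl⟩ := hw
  simp only [← eight_mul_T_add_one] at h
  exact ⟨x, y, z, by lia, by lia⟩

theorem stmt_11_general {n p c d : ℕ} (hcdp : c ^ 2 + d ^ 2 = p ^ 2) (hc : Odd c) (hcd : c < d)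
    (h : p ^ 2 ∣ 8 * n + 3) : ∃ x y z : ℕ, n = T x + T y + T z ∧ x % 2 ≠ y % 2 := by
  obtain ⟨m, hm⟩ := h
  have hp : Odd p := (four_dvd_and_odd_of_sq_add_sq_eq_sq hcdp hc).2
  have hm_mod : m % 8 = 3 := by
    have hp_sq : p ^ 2 ≡ 1 [MOD 8] := ((Nat.modEq_iff_dvd' hp.pow.pos).mpr
      (Nat.eight_dvd_sq_sub_one_of_odd hp)).symm
    have hpm : p ^ 2 * m ≡ m [MOD 8] := by simpa using hp_sq.mul_right m
    rw [← hm, Nat.ModEq] at hpm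
    lia
  obtain ⟨x, y, z, rfl, hx, hy, hz⟩ := exists_eq_sum_three_odd_sq_of_mod_eight_eq_three hm_mod
  obtain ⟨u, v, w, huvw, hu, hv, hw, huv⟩ :=
    exists_sum_three_odd_sq_four_dvd_add hcdp hc hcd hx hy hz
  exact exists_eq_add_T_of_odd_sq (hm.trans huvw) hu hv hw huv

theorem stmt_11 (n : ℕ)
    (h : 25 ∣ 8 * n + 3 ∨ 169 ∣ 8 * n + 3 ∨ 3721 ∣ 8 * n + 3) :
    ∃ x y z : ℕ, n = T x + T y + T z ∧ x % 2 ≠ y % 2 := by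
  rcases h with h | h | h
  · exact stmt_11_general (p := 5) (c := 3) (d := 4) (by norm_num) (by decide) (by norm_num) h
  · exact stmt_11_general (p := 13) (c := 5) (d := 12) (by norm_num) (by decide) (by norm_num) h
  · exact stmt_11_general (p := 61) (c := 11) (d := 60) (by norm_num) (by decide) (by norm_num) h
end
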